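/- arXiv:1711.09508 — 4 statements merged into one kernel-verified Lean document; each statement's English description precedes it below -/
import Mathlib

section
/- Let ι be a type, A : ι → ℚ a grading function, and C = ι →₀ F[X] the free F[X]-module on ι, with the Alexander grading determined by A. If x ∈ C is homogeneous of some degree s ∈ ℚ and x = (1 + X) • y for some y ∈ C, then x = 0. (This is the algebraic content of Lemma 5.3(1) of the paper: an Alexander-homogeneous chain in the collapsed link Floer chain complex that lies in the kernel of the map setting U = 1 must vanish.) -/
/-- In the free `F[X]`-module `C = ι →₀ F[X]` with Alexander grading
determined by `A : ι → ℚ` (where `X^k • single i 1` has degree `A i - k`),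
an element homogeneous of degree `s` that is divisible by `1 + X` must vanish. -/
theorem homogeneous_in_image_one_add_X_eq_zero
    {ι : Type*} (A : ι → ℚ) (s : ℚ)
    (x y : ι →₀ Polynomial (ZMod 2))
    (hhom : ∀ i ∈ x.support, ∃ (c : ZMod 2) (k : ℕ),
      c ≠ 0 ∧ x i = Polynomial.C c * Polynomial.X ^ k ∧ A i - (k : ℚ) = s)
    (hxy : x = (1 + Polynomial.X : Polynomial (ZMod 2)) • y) :
    x = 0 := by
  ext1 i
  by_contra hi
  obtain ⟨c, k, hc, hx, -⟩ := hhom i (Finsupp.mem_support_iff.mpr hi)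
  have h1 : x i = (1 + Polynomial.X) * y i := by
    rw [hxy, Finsupp.smul_apply, smul_eq_mul]
  rw [hx] at h1
  have h2 := congrArg (Polynomial.eval 1) h1
  have h3 : (1 + 1 : ZMod 2) = 0 := by decide
  simp only [Polynomial.eval_mul, Polynomial.eval_C, Polynomial.eval_pow, Polynomial.eval_X,
    Polynomial.eval_add, Polynomial.eval_one, one_pow, mul_one, h3, zero_mul] at h2
  exact hc h2
end

section
/- Let H be a finitely generated graded F[X]-module with X of degree −1 and let T be its torsion submodule. Then the quotient H ⧸ ((1 + X) • H) is a finite-dimensional F-vector space, and its F-dimension equals the rank of the finitely generated torsion-free F[X]-module H ⧸ T (which is free, F[X] being a principal ideal domain). (Dimension form of Theorem 5.4 of the paper.) -/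
open Polynomial in
theorem aux_decompose_X
    {H : Type*} [AddCommGroup H] [Module (Polynomial (ZMod 2)) H]
    [Module (ZMod 2) H]
    (ℋ : ℚ → Submodule (ZMod 2) H) [DirectSum.Decomposition ℋ]
    (hdeg : ∀ (s : ℚ) (h : H), h ∈ ℋ s →
      (Polynomial.X : Polynomial (ZMod 2)) • h ∈ ℋ (s - 1)) (h : H) :
    ∀ s : ℚ, (DirectSum.decompose ℋ ((X : (ZMod 2)[X]) • h) s : H)
      = (X : (ZMod 2)[X]) • (DirectSum.decompose ℋ h (s + 1) : H) := by
  induction h using DirectSum.Decomposition.inductionOn ℋ with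
  | zero => intro s; simp
  | @homogeneous i m =>
    intro s
    by_cases hs : i = s + 1
    · subst hs
      have h1 := hdeg _ m.1 m.2
      rw [add_sub_cancel_right] at h1
      rw [DirectSum.decompose_of_mem_same ℋ h1, DirectSum.decompose_of_mem_same ℋ m.2]
    · have h1 := hdeg _ m.1 m.2
      have h2 : i - 1 ≠ s := fun h => hs (by linarith)
      rw [DirectSum.decompose_of_mem_ne ℋ h1 h2, DirectSum.decompose_of_mem_ne ℋ m.2 hs, smul_zero]
  | add a b ha hb =>
    intro s
    simp [smul_add, DirectSum.decompose_add, ha s, hb s]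

open Polynomial in
theorem aux_injective
    {H : Type*} [AddCommGroup H] [Module (Polynomial (ZMod 2)) H]
    [Module (ZMod 2) H]
    (ℋ : ℚ → Submodule (ZMod 2) H)
    (hinternal : DirectSum.IsInternal ℋ)
    (hdeg : ∀ (s : ℚ) (h : H), h ∈ ℋ s →
      (Polynomial.X : Polynomial (ZMod 2)) • h ∈ ℋ (s - 1)) (h : H)
    (h0 : (1 + X : (ZMod 2)[X]) • h = 0) : h = 0 := by
  classical
  letI := hinternal.chooseDecomposition
  by_contra hne
  have hX : (X : (ZMod 2)[X]) • h = -h := by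
    rw [add_smul, one_smul] at h0
    exact (neg_eq_of_add_eq_zero_right h0).symm
  have hsupp : (DirectSum.decompose ℋ h).support.Nonempty := by
    rw [Finset.nonempty_iff_ne_empty]
    intro he
    rw [DFinsupp.support_eq_empty] at he
    exact hne ((DirectSum.decompose ℋ).injective (he.trans (DirectSum.decompose_zero ℋ).symm))
  set s := (DirectSum.decompose ℋ h).support.max' hsupp with hs
  have hmem : s ∈ (DirectSum.decompose ℋ h).support := Finset.max'_mem _ _
  have hnot : s + 1 ∉ (DirectSum.decompose ℋ h).support := by
    intro hc
    have := Finset.le_max' _ _ hc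
    rw [← hs] at this
    linarith
  rw [DFinsupp.mem_support_iff] at hmem
  rw [DFinsupp.notMem_support_iff] at hnot
  have h2 := aux_decompose_X ℋ hdeg h s
  rw [hX, hnot, DirectSum.decompose_neg] at h2
  have h3 : (-(DirectSum.decompose ℋ h)) s = -(DirectSum.decompose ℋ h s) := DFinsupp.neg_apply _ _
  rw [h3] at h2
  apply hmem
  ext
  simpa using h2

open Polynomial in
theorem aux_torsion
    {H : Type*} [AddCommGroup H] [Module (Polynomial (ZMod 2)) H]
    (hinj : ∀ h : H, (1 + X : (ZMod 2)[X]) • h = 0 → h = 0) :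
    Submodule.torsion (ZMod 2)[X] H ≤
      LinearMap.range (LinearMap.lsmul (ZMod 2)[X] H (1 + X)) := by
  intro t ht
  obtain ⟨⟨p, hp⟩, hpt⟩ := (Submodule.mem_torsion_iff t).mp ht
  have hp0 : p ≠ 0 := nonZeroDivisors.ne_zero hp
  change p • t = 0 at hpt
  have hX : (1 + X : (ZMod 2)[X]) = X - C 1 := by
    rw [CharTwo.sub_eq_add, C_1, add_comm]
  have hirr : Irreducible (1 + X : (ZMod 2)[X]) := hX ▸ irreducible_X_sub_C 1
  have hfin : FiniteMultiplicity (1 + X : (ZMod 2)[X]) p :=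
    FiniteMultiplicity.of_not_isUnit hirr.not_isUnit hp0
  obtain ⟨q, hq, hnd⟩ := hfin.exists_eq_pow_mul_and_not_dvd
  have hpow : ∀ (k : ℕ) (x : H), ((1 + X : (ZMod 2)[X]) ^ k) • x = 0 → x = 0 := by
    intro k
    induction k with
    | zero => intro x hx; simpa using hx
    | succ k ih => intro x hx; rw [pow_succ, mul_smul] at hx; exact hinj _ (ih _ hx)
  rw [hq, mul_smul] at hpt
  have hqt := hpow _ _ hpt
  obtain ⟨a, b, hab⟩ := (hirr.coprime_iff_not_dvd).mpr hnd
  refine ⟨a • t, ?_⟩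
  have : (a * (1 + X) + b * q) • t = t := by rw [hab, one_smul]
  rw [add_smul, mul_smul b, hqt, smul_zero, add_zero, mul_comm, mul_smul] at this
  exact this

open Polynomial in
/-- For a finitely generated graded `F[X]`-module `H` with `X` of degree `-1`,
the quotient `H ⧸ (1+X)•H` is a finite-dimensional `F`-vector space whose dimension equals
the rank of the free `F[X]`-module `H ⧸ T`, `T` the torsion submodule. -/
theorem finrank_quotient_one_add_X_eq_rank_torsionFree
    {H : Type*} [AddCommGroup H] [Module (Polynomial (ZMod 2)) H]
    [Module (ZMod 2) H] [IsScalarTower (ZMod 2) (Polynomial (ZMod 2)) H]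
    [Module.Finite (Polynomial (ZMod 2)) H]
    (ℋ : ℚ → Submodule (ZMod 2) H)
    (hinternal : DirectSum.IsInternal ℋ)
    (hdeg : ∀ (s : ℚ) (h : H), h ∈ ℋ s →
      (Polynomial.X : Polynomial (ZMod 2)) • h ∈ ℋ (s - 1)) :
    FiniteDimensional (ZMod 2)
      (H ⧸ LinearMap.range
        (LinearMap.lsmul (Polynomial (ZMod 2)) H (1 + Polynomial.X))) ∧
    Module.finrank (ZMod 2)
      (H ⧸ LinearMap.range
        (LinearMap.lsmul (Polynomial (ZMod 2)) H (1 + Polynomial.X))) =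
    Module.finrank (Polynomial (ZMod 2))
      (H ⧸ Submodule.torsion (Polynomial (ZMod 2)) H) := by
  classical
  have hT := aux_torsion (aux_injective ℋ hinternal hdeg)
  set T := Submodule.torsion (ZMod 2)[X] H with hTdef
  set N := LinearMap.range (LinearMap.lsmul (ZMod 2)[X] H (1 + X)) with hN
  have hX : (1 + X : (ZMod 2)[X]) = X - C 1 := by
    rw [CharTwo.sub_eq_add, C_1, add_comm]
  haveI : Module.IsTorsionFree (ZMod 2)[X] (H ⧸ T) := by
    rw [hTdef]; infer_instance
  haveI : Module.Free (ZMod 2)[X] (H ⧸ T) := inferInstance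
  let b := Module.finBasis (ZMod 2)[X] (H ⧸ T)
  let g : H →ₗ[(ZMod 2)[X]] (Fin (Module.finrank (ZMod 2)[X] (H ⧸ T)) → (ZMod 2)[X]) :=
    b.equivFun.toLinearMap ∘ₗ T.mkQ
  let f : H →ₗ[ZMod 2] (Fin (Module.finrank (ZMod 2)[X] (H ⧸ T)) → ZMod 2) :=
    ((Polynomial.leval (1 : ZMod 2)).compLeft _) ∘ₗ g.restrictScalars (ZMod 2)
  have hg : Function.Surjective g := b.equivFun.surjective.comp T.mkQ_surjective
  have hgker : ∀ h, g h = 0 → h ∈ T := by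
    intro h hh
    have : T.mkQ h = 0 := b.equivFun.injective (by rw [map_zero]; exact hh)
    simpa using this
  have hfapp : ∀ h i, f h i = (g h i).eval 1 := fun h i => rfl
  have hf : Function.Surjective f := by
    intro v
    obtain ⟨h, hh⟩ := hg (fun i => C (v i))
    refine ⟨h, ?_⟩
    ext i
    rw [hfapp, hh, eval_C]
  have hker : LinearMap.ker f = N.restrictScalars (ZMod 2) := by
    ext h
    rw [LinearMap.mem_ker, Submodule.restrictScalars_mem]
    constructor
    · intro hh
      have hd : ∀ i, ∃ q, g h i = (1 + X) * q := by
        intro i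
        have : (X - C 1) ∣ g h i := by
          rw [dvd_iff_isRoot, IsRoot.def, ← hfapp, hh]; rfl
        rw [← hX] at this
        exact this
      choose q hq using hd
      obtain ⟨y, hy⟩ := hg q
      have h1 : g (h - (1 + X : (ZMod 2)[X]) • y) = 0 := by
        rw [map_sub, map_smul, hy]
        ext1 i
        simp [hq i]
      have h2 := hT (hgker _ h1)
      have h3 : (1 + X : (ZMod 2)[X]) • y ∈ N := ⟨y, rfl⟩
      simpa using N.add_mem h2 h3
    · rintro ⟨y, rfl⟩
      ext i
      rw [hfapp, LinearMap.lsmul_apply, map_smul, Pi.smul_apply, smul_eq_mul, hX]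
      simp
  let e : (H ⧸ N) ≃ₗ[ZMod 2] (Fin (Module.finrank (ZMod 2)[X] (H ⧸ T)) → ZMod 2) :=
    (Submodule.Quotient.restrictScalarsEquiv (ZMod 2) N).symm ≪≫ₗ
      (Submodule.quotEquivOfEq _ _ hker.symm) ≪≫ₗ f.quotKerEquivOfSurjective hf
  exact ⟨Module.Finite.equiv e.symm, by rw [e.finrank_eq]; simp⟩
end

section
/- Let H be a graded F[X]-module with X of degree −1. Then every torsion element of H is divisible by 1 + X: if x ∈ H satisfies p • x = 0 for some nonzero polynomial p ∈ F[X], then there exists y ∈ H with x = (1 + X) • y. (Intermediate claim needed for the surjectivity part of Theorem 5.4 of the paper.) -/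
/-- In a graded `F[X]`-module with `X` of degree `-1`, every torsion element
is divisible by `1 + X`. -/
theorem torsion_divisible_by_one_add_X
    {H : Type*} [AddCommGroup H] [Module (Polynomial (ZMod 2)) H]
    [Module (ZMod 2) H] [IsScalarTower (ZMod 2) (Polynomial (ZMod 2)) H]
    (ℋ : ℚ → Submodule (ZMod 2) H)
    (hinternal : DirectSum.IsInternal ℋ)
    (hdeg : ∀ (s : ℚ) (h : H), h ∈ ℋ s →
      (Polynomial.X : Polynomial (ZMod 2)) • h ∈ ℋ (s - 1))
    (x : H) (p : Polynomial (ZMod 2)) (hp : p ≠ 0) (hpx : p • x = 0) :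
    ∃ y : H, x = (1 + Polynomial.X : Polynomial (ZMod 2)) • y := by
  classical
  let _inst : DirectSum.Decomposition ℋ := hinternal.chooseDecomposition
  -- components of `X • h`
  have hcomp : ∀ (h : H) (s : ℚ),
      (DirectSum.decompose ℋ ((Polynomial.X : Polynomial (ZMod 2)) • h) s : H) =
        (Polynomial.X : Polynomial (ZMod 2)) • (DirectSum.decompose ℋ h (s + 1) : H) := by
    intro h s
    induction h using DirectSum.Decomposition.inductionOn ℋ with
    | zero => simp
    | @homogeneous i m =>
      by_cases his : i = s + 1
      · subst his
        have h1 := hdeg _ _ m.2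
        rw [add_sub_cancel_right] at h1
        rw [DirectSum.decompose_of_mem_same ℋ h1, DirectSum.decompose_of_mem_same ℋ m.2]
      · have h2 : i - 1 ≠ s := fun h => his (by rw [← h]; ring)
        rw [DirectSum.decompose_of_mem_ne ℋ (hdeg _ _ m.2) h2,
          DirectSum.decompose_of_mem_ne ℋ m.2 his, smul_zero]
    | add a b ha hb =>
      rw [smul_add, DirectSum.decompose_add, DirectSum.decompose_add, DirectSum.add_apply,
        DirectSum.add_apply, Submodule.coe_add, Submodule.coe_add, ha, hb, smul_add]
  -- `1 + X` acts injectively: look at the top degree component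
  have hinj : ∀ h : H, (1 + Polynomial.X : Polynomial (ZMod 2)) • h = 0 → h = 0 := by
    intro h hh
    rw [add_smul, one_smul] at hh
    by_contra hne
    have hd : DirectSum.decompose ℋ h ≠ 0 := fun h0 => hne
      ((DirectSum.decompose ℋ).injective (h0.trans (DirectSum.decompose_zero ℋ).symm))
    have hsupp : (DFinsupp.support (DirectSum.decompose ℋ h)).Nonempty := by
      rw [Finset.nonempty_iff_ne_empty]
      exact fun h0 => hd (DFinsupp.support_eq_empty.mp h0)
    obtain ⟨s, hs, hmax⟩ := Finset.exists_max_image _ id hsupp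
    have htop : DirectSum.decompose ℋ h (s + 1) = 0 := by
      by_contra h0
      have := hmax (s + 1) (DFinsupp.mem_support_iff.mpr h0)
      simp only [id] at this
      linarith
    have hc := hcomp h s
    have hsum : (DirectSum.decompose ℋ (h + (Polynomial.X : Polynomial (ZMod 2)) • h) s : H) = 0 := by
      rw [hh, DirectSum.decompose_zero]; rfl
    rw [DirectSum.decompose_add, DirectSum.add_apply, Submodule.coe_add, hc, htop,
      Submodule.coe_zero, smul_zero, add_zero] at hsum
    exact DFinsupp.mem_support_iff.mp hs (Subtype.ext hsum)
  have hinjpow : ∀ (n : ℕ) (h : H), (1 + Polynomial.X : Polynomial (ZMod 2)) ^ n • h = 0 → h = 0 := by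
    intro n
    induction n with
    | zero => intro h hh; simpa using hh
    | succ n ih =>
      intro h hh
      rw [pow_succ, mul_smul] at hh
      exact hinj _ (ih _ hh)
  obtain ⟨q, hq, hndvd⟩ := Polynomial.exists_eq_pow_rootMultiplicity_mul_and_not_dvd p hp (-1)
  have hco := ((Polynomial.irreducible_X_sub_C (-1 : ZMod 2)).coprime_iff_not_dvd).mpr hndvd
  have he : (Polynomial.X - Polynomial.C (-1) : Polynomial (ZMod 2)) = 1 + Polynomial.X := by
    rw [Polynomial.C_neg, Polynomial.C_1]; ring
  rw [he] at hq hco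
  rw [hq, mul_smul] at hpx
  have hqx := hinjpow _ _ hpx
  obtain ⟨u, v, huv⟩ := hco
  refine ⟨u • x, ?_⟩
  have h1 : (u * (1 + Polynomial.X) + v * q) • x = x := by rw [huv, one_smul]
  rw [add_smul, mul_smul v, hqx, smul_zero, add_zero, mul_comm, mul_smul] at h1
  exact h1.symm
end

section
/- Let H be a graded F[X]-module with X of degree −1 which is finitely generated over F[X] and in which every element is torsion (for each x ∈ H there is a nonzero p ∈ F[X] with p • x = 0). Then there exists N ∈ ℕ such that X^N • x = 0 for every x ∈ H. (Uniform version, for the torsion part of cHFL⁻, of the paper's observation that torsion classes are killed by powers of U; it fails without the grading hypothesis, e.g. for F[X]/(1+X).) -/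
/-- A finitely generated graded `F[X]`-module with `X` of degree `-1`, all of
whose elements are torsion, is uniformly annihilated by a power of `X`. -/
theorem torsion_module_killed_by_uniform_X_pow
    {H : Type*} [AddCommGroup H] [Module (Polynomial (ZMod 2)) H]
    [Module (ZMod 2) H] [IsScalarTower (ZMod 2) (Polynomial (ZMod 2)) H]
    [Module.Finite (Polynomial (ZMod 2)) H]
    (ℋ : ℚ → Submodule (ZMod 2) H)
    (hinternal : DirectSum.IsInternal ℋ)
    (hdeg : ∀ (s : ℚ) (h : H), h ∈ ℋ s →
      (Polynomial.X : Polynomial (ZMod 2)) • h ∈ ℋ (s - 1))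
    (htor : ∀ x : H, ∃ p : Polynomial (ZMod 2), p ≠ 0 ∧ p • x = 0) :
    ∃ N : ℕ, ∀ x : H, (Polynomial.X : Polynomial (ZMod 2)) ^ N • x = 0 := by
  have hpow : ∀ (k : ℕ) (s : ℚ) (h : H), h ∈ ℋ s →
      (Polynomial.X : Polynomial (ZMod 2)) ^ k • h ∈ ℋ (s - k) := by
    intro k
    induction k with
    | zero => intro s h hh; simpa using hh
    | succ k ih =>
      intro s h hh
      have h1 := hdeg _ _ (ih s h hh)
      rw [smul_smul, ← pow_succ'] at h1
      have e : s - ((k + 1 : ℕ) : ℚ) = s - k - 1 := by push_cast; ring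
      rw [e]
      exact h1
  -- homogeneous elements are killed by a power of X
  have hhom : ∀ (s : ℚ) (h : H), h ∈ ℋ s →
      ∃ n : ℕ, (Polynomial.X : Polynomial (ZMod 2)) ^ n • h = 0 := by
    intro s h hh
    obtain ⟨p, hp, hph⟩ := htor h
    have hinj : Function.Injective (fun k : ℕ => s - (k : ℚ)) := by
      intro a b hab
      simpa using hab
    have hind := hinternal.submodule_iSupIndep.comp hinj
    rw [iSupIndep_iff_finsetSum_eq_zero_imp_eq_zero] at hind
    have key := hind p.support
      (fun k => p.coeff k • ((Polynomial.X : Polynomial (ZMod 2)) ^ k • h))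
      (fun k _ => (ℋ (s - k)).smul_mem _ (hpow k s h hh))
      (by
        have e := p.as_sum_support_C_mul_X_pow
        rw [e, Finset.sum_smul] at hph
        rw [← hph]
        refine Finset.sum_congr rfl fun k _ => ?_
        rw [← Polynomial.smul_eq_C_mul, smul_assoc])
      p.natDegree (Polynomial.natDegree_mem_support_of_nonzero hp)
    refine ⟨p.natDegree, ?_⟩
    have hl : p.coeff p.natDegree ≠ 0 := by simpa using hp
    exact (smul_eq_zero_iff_right hl).mp key
  have hmono : ∀ (m n : ℕ) (x : H), m ≤ n →
      (Polynomial.X : Polynomial (ZMod 2)) ^ m • x = 0 →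
      (Polynomial.X : Polynomial (ZMod 2)) ^ n • x = 0 := by
    intro m n x hmn hx
    obtain ⟨d, rfl⟩ := Nat.exists_eq_add_of_le hmn
    rw [add_comm, pow_add, mul_smul, hx, smul_zero]
  -- every element is killed by a power of X
  have hall : ∀ x : H, ∃ n : ℕ, (Polynomial.X : Polynomial (ZMod 2)) ^ n • x = 0 := by
    intro x
    have hx : x ∈ iSup ℋ := by rw [hinternal.submodule_iSup_eq_top]; trivial
    induction hx using Submodule.iSup_induction' with
    | mem s h hh => exact hhom s h hh
    | zero => exact ⟨0, smul_zero _⟩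
    | add x y _ _ hx hy =>
      obtain ⟨m, hm⟩ := hx
      obtain ⟨n, hn⟩ := hy
      refine ⟨max m n, ?_⟩
      rw [smul_add, hmono m _ x (le_max_left _ _) hm, hmono n _ y (le_max_right _ _) hn, add_zero]
  obtain ⟨S, hS⟩ := (Module.Finite.fg_top : (⊤ : Submodule (Polynomial (ZMod 2)) H).FG)
  choose f hf using hall
  refine ⟨S.sup f, fun x => ?_⟩
  have hx : x ∈ Submodule.span (Polynomial (ZMod 2)) (S : Set H) := by rw [hS]; trivial
  induction hx using Submodule.span_induction with
  | mem y hy => exact hmono _ _ y (Finset.le_sup hy) (hf y)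
  | zero => exact smul_zero _
  | add y z _ _ hy hz => rw [smul_add, hy, hz, add_zero]
  | smul a y _ hy => rw [smul_comm, hy, smul_zero]
end
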